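/- Let P be the R-measure, n ≥ 3, and let α be an optimal set of n-means for P. For 1 ≤ i ≤ 3 set β_i := α ∩ △_i and n_i := card(β_i), where △_i = S_i(△) and △ is the closed triangle with vertices (0,0), (1,0), (1/2, √3/2) (the convex hull of these three points). Then for each i, the set S_i⁻¹(β_i) (the image of β_i under the inverse of S_i) is an optimal set of n_i-means for P, and V_n(P) = ∑_{i=1}^{3} (1/27)·V_{n_i}(P). -/

import Mathlib

open MeasureTheory ENNReal

noncomputable section

abbrev E2 : Type := EuclideanSpace ℝ (Fin 2)

/-- The point (a, b) of the Euclidean plane. -/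
def pt (a b : ℝ) : E2 := (WithLp.equiv 2 (Fin 2 → ℝ)).symm ![a, b]

/-- S₁(x) = x/3. -/
def S1 : E2 → E2 := fun x => (3 : ℝ)⁻¹ • x

/-- S₂(x) = x/3 + (2/3, 0). -/
def S2 : E2 → E2 := fun x => (3 : ℝ)⁻¹ • x + pt (2/3) 0

/-- S₃(x) = x/3 + (1/3, √3/3). -/
def S3 : E2 → E2 := fun x => (3 : ℝ)⁻¹ • x + pt (1/3) (Real.sqrt 3 / 3)

def Smap : Fin 3 → E2 → E2 := ![S1, S2, S3]

/-- For a word ω = ω₁⋯ω_k ∈ {1,2,3}^k, the composition S_ω = S_{ω₁} ∘ ⋯ ∘ S_{ω_k}. -/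
def Sword {k : ℕ} (ω : Fin k → Fin 3) : E2 → E2 :=
  fun x => (List.ofFn fun i => Smap (ω i)).foldr (fun g y => g y) x

/-- The closed triangle with vertices (0,0), (1,0), (1/2, √3/2). -/
def Tri : Set E2 := convexHull ℝ {pt 0 0, pt 1 0, pt (1/2) (Real.sqrt 3 / 2)}

/-- The distortion error ∫ min_{a ∈ α} ‖x − a‖² dμ of a set α of points. -/
def err (μ : Measure E2) (α : Set E2) : ℝ≥0∞ :=
  ∫⁻ x, ⨅ a ∈ α, ENNReal.ofReal (‖x - a‖ ^ 2) ∂μ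

/-- The n-th quantization error V_n(μ). -/
def quantErr (μ : Measure E2) (n : ℕ) : ℝ≥0∞ :=
  ⨅ (α : Set E2) (_ : α.Finite ∧ α.ncard ≤ n), err μ α

/-- α is an optimal set of n-means for μ. -/
def IsOptimal (μ : Measure E2) (n : ℕ) (α : Set E2) : Prop :=
  α.Finite ∧ α.ncard ≤ n ∧ err μ α = quantErr μ n

/-!
Scaling up a set `α` by the inverse of `Smap i` shows it in the frame of the `i`-th cell, and
self-similarity makes the distortion of `α` equal to `1/27` times the sum of its distortions in the
three frames. By optimality, no choice of one point set per cell, of total size at most `n`, has a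
smaller sum of distortions.

Assign every point of `α` to the cell of its nearest vertex of `Tri`. The point is that each cell is
served by its own points alone. Seen in a frame, foreign points lie at distance at least `1/2` from
`Tri`, so they can only matter if some point of `Tri` is far from all points assigned to the cell;
this costs more than the explicit `k`-point sets measured by `blockCost k`. The one exception,
possible only when some cell has at most two points, is a foreign point that strays far away from
its own cell. It helps its neighbours by at most one unit each, while its own cell loses more than
the number of neighbours helped, so that replacing `α` by the explicit sets is again a net gain.
-/

section Distortion

variable {X : Type*} [PseudoMetricSpace X]

lemma infDist_sq_le_dist_sq {A : Set X} {a : X} (ha : a ∈ A) (x : X) :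
    Metric.infDist x A ^ 2 ≤ dist x a ^ 2 :=
  pow_le_pow_left₀ Metric.infDist_nonneg (Metric.infDist_le_dist_of_mem ha) 2

/-- The mean squared distance to `A` of a `μ`-distributed random point. This is the quantization
error of `A` as a real number, hence `0` for `A = ∅` and where the integral diverges. -/
def distortion [MeasurableSpace X] (μ : Measure X) (A : Set X) : ℝ :=
  ∫ x, Metric.infDist x A ^ 2 ∂μ

lemma distortion_nonneg [MeasurableSpace X] (μ : Measure X) (A : Set X) : 0 ≤ distortion μ A :=
  integral_nonneg fun _ => sq_nonneg _

lemma distortion_anti [MeasurableSpace X] {μ : Measure X} {A B : Set X} (hA : A.Nonempty)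
    (hAB : A ⊆ B) (hint : Integrable (fun x => Metric.infDist x A ^ 2) μ) :
    distortion μ B ≤ distortion μ A :=
  integral_mono_of_nonneg (ae_of_all _ fun _ => sq_nonneg _) hint (ae_of_all _ fun _ =>
    pow_le_pow_left₀ Metric.infDist_nonneg (Metric.infDist_le_infDist_of_subset hAB hA) 2)

-- Were no insertion to help, almost every `x` would satisfy `infDist x A ≤ dist x y` for all `y` in
-- a countable dense set, hence for `y = x`.
lemma exists_distortion_insert_lt_of_pos [TopologicalSpace.SeparableSpace X] [MeasurableSpace X]
    [OpensMeasurableSpace X] {μ : Measure X} {A : Set X} (hA : A.Nonempty)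
    (hint : Integrable (fun x => Metric.infDist x A ^ 2) μ) (hpos : 0 < distortion μ A) :
    ∃ y, distortion μ (insert y A) < distortion μ A := by
  by_contra! hmin
  have hle y x : Metric.infDist x (insert y A) ^ 2 ≤ Metric.infDist x A ^ 2 :=
    pow_le_pow_left₀ Metric.infDist_nonneg
      (Metric.infDist_le_infDist_of_subset (Set.subset_insert y A) hA) 2
  have hint' y : Integrable (fun x => Metric.infDist x (insert y A) ^ 2) μ :=
    hint.mono' (by fun_prop) (ae_of_all _ fun x => by
      rw [Real.norm_of_nonneg (sq_nonneg _)]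
      exact hle y x)
  have hclose y : ∀ᵐ x ∂μ, Metric.infDist x A ^ 2 ≤ dist x y ^ 2 := by
    have heq := (integral_eq_iff_of_ae_le (hint' y) hint (ae_of_all _ (hle y))).1
      ((integral_mono (hint' y) hint (hle y)).antisymm (hmin y))
    filter_upwards [heq] with x hx
    exact hx.symm.trans_le (infDist_sq_le_dist_sq (Set.mem_insert y A) x)
  have : Nonempty X := ⟨hA.some⟩
  refine hpos.ne' (integral_eq_zero_of_ae ?_)
  filter_upwards [ae_all_iff.2 fun n => hclose (TopologicalSpace.denseSeq X n)] with x hx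
  have hall : ∀ y, Metric.infDist x A ^ 2 ≤ dist x y ^ 2 := fun y =>
    (TopologicalSpace.denseRange_denseSeq X).induction_on y
      (isClosed_le continuous_const (by fun_prop)) hx
  simpa using (hall x).antisymm (by simpa using sq_nonneg (Metric.infDist x A))

-- Minimising `d²` under `R ≤ dist x y + d` at the expected scale `dist x y ≈ σ` gives this tangent
-- bound, which is linear in `dist x y ^ 2` and therefore can be integrated.
lemma tangent_bound_infDist_sq {A : Set X} {x y : X} {σ R : ℝ} (hσ : 0 < σ) (hσR : σ ≤ R)
    (hA : R ≤ Metric.infDist y A) :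
    (R - σ) * (R * σ - dist x y ^ 2) ≤ σ * Metric.infDist x A ^ 2 := by
  set q := dist x y
  set d := Metric.infDist x A
  have hRqd : R ≤ q + d := by
    have := Metric.infDist_le_infDist_add_dist (s := A) (x := y) (y := x)
    rw [dist_comm] at this
    linarith
  have identity : R * (q ^ 2 * (R - σ) + d ^ 2 * σ)
      = σ * (R - σ) * (q + d) ^ 2 + (q * (R - σ) - d * σ) ^ 2 := by ring
  have hsq : R ^ 2 ≤ (q + d) ^ 2 := pow_le_pow_left₀ (by linarith) hRqd 2
  have hcoef : 0 ≤ σ * (R - σ) := mul_nonneg hσ.le (by linarith)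
  have : R * (σ * (R - σ) * R) ≤ R * (q ^ 2 * (R - σ) + d ^ 2 * σ) := by
    rw [identity]
    nlinarith [mul_le_mul_of_nonneg_left hsq hcoef, sq_nonneg (q * (R - σ) - d * σ)]
  linarith [le_of_mul_le_mul_left this (by linarith)]

lemma sq_sub_le_distortion_of_le_infDist [MeasurableSpace X] {μ : Measure X}
    [IsProbabilityMeasure μ] {A : Set X} {y : X} {σ R : ℝ} (hσ : 0 < σ) (hσR : σ ≤ R)
    (hA : R ≤ Metric.infDist y A) (hintA : Integrable (fun x => Metric.infDist x A ^ 2) μ)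
    (hinty : Integrable (fun x => dist x y ^ 2) μ) (hy : ∫ x, dist x y ^ 2 ∂μ ≤ σ ^ 2) :
    (R - σ) ^ 2 ≤ distortion μ A := by
  have hint : (R - σ) * (R * σ - ∫ x, dist x y ^ 2 ∂μ) ≤ σ * distortion μ A := calc
    _ = ∫ x, (R - σ) * (R * σ - dist x y ^ 2) ∂μ := by
      rw [integral_const_mul, integral_sub (integrable_const _) hinty, integral_const,
        probReal_univ, one_smul]
    _ ≤ ∫ x, σ * Metric.infDist x A ^ 2 ∂μ :=
      integral_mono (((integrable_const _).sub hinty).const_mul _) (hintA.const_mul _)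
        fun _ => tangent_bound_infDist_sq hσ hσR hA
    _ = σ * distortion μ A := integral_const_mul _ _
  refine le_of_mul_le_mul_left ?_ hσ
  nlinarith [mul_le_mul_of_nonneg_left hy (sub_nonneg.2 hσR)]

lemma sub_sum_max_le_infDist_sq {A K : Finset X} (hA : A.Nonempty) {δ : ℝ} {x : X}
    (hfar : ∀ a ∈ A, a ∉ K → δ ≤ dist x a ^ 2) :
    δ - ∑ a ∈ K, max 0 (δ - dist x a ^ 2) ≤ Metric.infDist x A ^ 2 := by
  obtain ⟨a, haA, hxa⟩ := A.finite_toSet.isCompact.exists_infDist_eq_dist hA x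
  rw [hxa]
  by_cases haK : a ∈ K
  · have := Finset.single_le_sum (fun b _ => le_max_left 0 (δ - dist x b ^ 2)) haK
    linarith [le_max_right 0 (δ - dist x a ^ 2)]
  · have := Finset.sum_nonneg fun b (_ : b ∈ K) => le_max_left 0 (δ - dist x b ^ 2)
    linarith [hfar a haA haK]

end Distortion

section Spread

variable {ι E : Type*} [NormedAddCommGroup E]

lemma card_mul_le_sum_sum_norm_sub_sq {s : Finset ι} {y : ι → E} {c : ℝ}
    (hy : ∀ i ∈ s, ∀ j ∈ s, i ≠ j → c ≤ ‖y i - y j‖ ^ 2) :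
    s.card * ((s.card - 1) * c) ≤ ∑ i ∈ s, ∑ j ∈ s, ‖y i - y j‖ ^ 2 := by
  classical
  rw [← nsmul_eq_mul]
  refine Finset.card_nsmul_le_sum _ _ _ fun i hi => ?_
  rw [← Finset.add_sum_erase s _ hi, ← Finset.cast_card_erase_of_mem hi, ← nsmul_eq_mul]
  refine le_add_of_nonneg_of_le (sq_nonneg _) (Finset.card_nsmul_le_sum _ _ _ fun j hj => ?_)
  exact hy i hi j (Finset.mem_of_mem_erase hj) (Finset.ne_of_mem_erase hj).symm

variable [InnerProductSpace ℝ E]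

lemma sum_sum_norm_sub_sq_le (s : Finset ι) (z : ι → E) :
    ∑ i ∈ s, ∑ j ∈ s, ‖z i - z j‖ ^ 2 ≤ 2 * s.card * ∑ i ∈ s, ‖z i‖ ^ 2 := by
  have hcross : ∑ i ∈ s, ∑ j ∈ s, (inner ℝ (z i) (z j) : ℝ) = ‖∑ i ∈ s, z i‖ ^ 2 := by
    rw [← real_inner_self_eq_norm_sq, sum_inner]
    simp only [inner_sum]
  simp only [norm_sub_sq_real, Finset.sum_add_distrib, Finset.sum_sub_distrib, ← Finset.mul_sum,
    Finset.sum_const, nsmul_eq_mul, hcross]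
  linarith [sq_nonneg ‖∑ i ∈ s, z i‖]

lemma sum_max_sub_norm_sub_sq_le {s : Finset ι} {y : ι → E} {δ : ℝ} (hδ : 0 ≤ δ)
    (hy : ∀ i ∈ s, ∀ j ∈ s, i ≠ j → 2 * δ ≤ ‖y i - y j‖ ^ 2) (a : E) :
    ∑ i ∈ s, max 0 (δ - ‖y i - a‖ ^ 2) ≤ δ := by
  classical
  set t := s.filter fun i => ‖y i - a‖ ^ 2 < δ
  have hsum : ∑ i ∈ s, max 0 (δ - ‖y i - a‖ ^ 2) = t.card * δ - ∑ i ∈ t, ‖y i - a‖ ^ 2 := by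
    rw [← nsmul_eq_mul, ← Finset.sum_const, ← Finset.sum_sub_distrib, Finset.sum_filter]
    refine Finset.sum_congr rfl fun i _ => ?_
    split_ifs with h
    · exact max_eq_right (by linarith)
    · exact max_eq_left (by linarith)
  have hspread : t.card * ((t.card - 1) * (2 * δ)) ≤ ∑ i ∈ t, ∑ j ∈ t, ‖y i - y j‖ ^ 2 :=
    card_mul_le_sum_sum_norm_sub_sq fun i hi j hj =>
      hy i (Finset.mem_of_mem_filter i hi) j (Finset.mem_of_mem_filter j hj)
  have hvar := sum_sum_norm_sub_sq_le t fun i => y i - a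
  simp only [sub_sub_sub_cancel_right] at hvar
  rcases t.eq_empty_or_nonempty with ht | ht
  · simpa [hsum, ht] using hδ
  · have hcard : (0 : ℝ) < t.card := by exact_mod_cast ht.card_pos
    have : (t.card - 1) * δ ≤ ∑ i ∈ t, ‖y i - a‖ ^ 2 := by
      refine le_of_mul_le_mul_left ?_ hcard
      linarith
    linarith

end Spread

section Triangle

/-- The vertices of `Tri`; `vertex i` is the fixed point of `Smap i`. -/
def vertex : Fin 3 → E2 := ![pt 0 0, pt 1 0, pt (1/2) (Real.sqrt 3 / 2)]

/-- The centroid of `Tri`, which is also the barycentre of the R-measure. -/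
def triCentroid : E2 := pt (1/2) (Real.sqrt 3 / 6)

/-- The coordinate of `x` along the edge of `Tri` from `vertex i` to `vertex j`, measured from the
centroid; the two endpoints have coordinates `-1/2` and `1/2`. -/
def edgeCoord (i j : Fin 3) (x : E2) : ℝ := inner ℝ (x - triCentroid) (vertex j - vertex i)

lemma Smap_eq_smul_add (i : Fin 3) (x : E2) :
    Smap i x = (3⁻¹ : ℝ) • x + (2 / 3 : ℝ) • vertex i := by
  fin_cases i <;> ext k <;> fin_cases k <;> simp [Smap, S1, S2, S3, vertex, pt]
  ring

lemma inner_vertex_sub_triCentroid (i j : Fin 3) :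
    inner ℝ (vertex i - triCentroid) (vertex j - triCentroid)
      = if i = j then (1 / 3 : ℝ) else -1 / 6 := by
  have hsqrt : Real.sqrt 3 * Real.sqrt 3 = 3 := Real.mul_self_sqrt (by norm_num)
  fin_cases i <;> fin_cases j <;>
    simp [vertex, triCentroid, pt, PiLp.inner_apply, Fin.sum_univ_two,
      -inner_self_eq_norm_sq_to_K] <;>
    linarith

lemma sum_vertex_sub_triCentroid : ∑ i, (vertex i - triCentroid) = 0 := by
  ext k
  fin_cases k <;> simp [Fin.sum_univ_three, vertex, triCentroid, pt] <;> ring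

lemma norm_vertex_sub_vertex_sq {i j : Fin 3} (hij : i ≠ j) : ‖vertex i - vertex j‖ ^ 2 = 1 := by
  have := norm_sub_sq_real (vertex i - triCentroid) (vertex j - triCentroid)
  simp only [← real_inner_self_eq_norm_sq, inner_vertex_sub_triCentroid, sub_sub_sub_cancel_right,
    if_neg hij, ↓reduceIte] at this ⊢
  linarith

lemma norm_vertex_sub_vertex_le (i j : Fin 3) : ‖vertex i - vertex j‖ ≤ 1 := by
  by_cases hij : i = j
  · simp [hij]
  · exact (pow_le_one_iff_of_nonneg (norm_nonneg _) two_ne_zero).1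
      (norm_vertex_sub_vertex_sq hij).le

lemma Tri_eq_convexHull_range : Tri = convexHull ℝ (Set.range vertex) := by
  simp only [Tri, vertex, Matrix.range_cons, Matrix.range_empty, Set.union_empty,
    Set.singleton_union]

lemma vertex_mem_Tri (i : Fin 3) : vertex i ∈ Tri := by
  rw [Tri_eq_convexHull_range]
  exact subset_convexHull _ _ ⟨i, rfl⟩

lemma Tri_subset_of_convex {s : Set E2} (hs : Convex ℝ s) (h : ∀ i, vertex i ∈ s) : Tri ⊆ s := by
  rw [Tri_eq_convexHull_range]
  exact convexHull_min (Set.range_subset_iff.2 h) hs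

lemma convex_Tri : Convex ℝ Tri := convex_convexHull _ _

lemma nonempty_Tri : Tri.Nonempty := ⟨_, vertex_mem_Tri 0⟩

lemma isCompact_Tri : IsCompact Tri := by
  rw [Tri_eq_convexHull_range]
  exact (Set.finite_range vertex).isCompact_convexHull ℝ

lemma continuous_Smap (i : Fin 3) : Continuous (Smap i) := by
  simp only [funext (Smap_eq_smul_add i)]
  fun_prop

lemma Smap_mem_Tri (i : Fin 3) {x : E2} (hx : x ∈ Tri) : Smap i x ∈ Tri := by
  rw [Smap_eq_smul_add]
  exact convex_Tri hx (vertex_mem_Tri i) (by norm_num) (by norm_num) (by norm_num)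

lemma Smap_sub_triCentroid (i : Fin 3) (x : E2) :
    Smap i x - triCentroid
      = (3⁻¹ : ℝ) • (x - triCentroid) + (2 / 3 : ℝ) • (vertex i - triCentroid) := by
  rw [Smap_eq_smul_add]
  module

lemma norm_Smap_triCentroid_sub_sq (i : Fin 3) :
    ‖Smap i triCentroid - triCentroid‖ ^ 2 = 4 / 27 := by
  rw [Smap_sub_triCentroid, sub_self, smul_zero, zero_add, norm_smul, mul_pow,
    ← real_inner_self_eq_norm_sq (vertex i - triCentroid), inner_vertex_sub_triCentroid, if_pos rfl]
  norm_num

lemma Smap_sub_Smap (i : Fin 3) (x y : E2) : Smap i x - Smap i y = (3⁻¹ : ℝ) • (x - y) := by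
  rw [Smap_eq_smul_add, Smap_eq_smul_add]
  module

lemma Smap_sub_Smap_same_point (i j : Fin 3) (x : E2) :
    Smap i x - Smap j x = (2 / 3 : ℝ) • (vertex i - vertex j) := by
  rw [Smap_eq_smul_add, Smap_eq_smul_add]
  module

lemma norm_Smap_sub_Smap_sq {i j : Fin 3} (hij : i ≠ j) (x : E2) :
    ‖Smap i x - Smap j x‖ ^ 2 = 4 / 9 := by
  rw [Smap_sub_Smap_same_point, norm_smul, mul_pow, norm_vertex_sub_vertex_sq hij]
  norm_num

lemma dist_Smap_Smap (i : Fin 3) (x y : E2) : dist (Smap i x) (Smap i y) = 3⁻¹ * dist x y := by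
  rw [dist_eq_norm, Smap_sub_Smap, norm_smul, dist_eq_norm, Real.norm_of_nonneg (by norm_num)]

lemma edgeCoord_swap (i j : Fin 3) (x : E2) : edgeCoord j i x = -edgeCoord i j x := by
  rw [edgeCoord, edgeCoord, ← inner_neg_right, neg_sub]

lemma ne_of_edgeCoord_pos {i j : Fin 3} {x : E2} (h : 0 < edgeCoord i j x) : i ≠ j := by
  rintro rfl
  rw [edgeCoord, sub_self, inner_zero_right] at h
  exact h.false

lemma edgeCoord_vertex (i j m : Fin 3) :
    edgeCoord i j (vertex m) = ((if m = j then 1 else 0) - (if m = i then 1 else 0)) / 2 := by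
  rw [edgeCoord, ← sub_sub_sub_cancel_right (vertex j) (vertex i) triCentroid, inner_sub_right,
    inner_vertex_sub_triCentroid, inner_vertex_sub_triCentroid]
  split_ifs <;> norm_num

lemma edgeCoord_Smap (i j m : Fin 3) (x : E2) :
    edgeCoord i j (Smap m x) = edgeCoord i j x / 3 + 2 / 3 * edgeCoord i j (vertex m) := by
  rw [edgeCoord, Smap_sub_triCentroid, inner_add_left, real_inner_smul_left, real_inner_smul_left,
    edgeCoord, edgeCoord]
  ring

lemma edgeCoord_sub_le_dist (i j : Fin 3) (x y : E2) :
    edgeCoord i j x - edgeCoord i j y ≤ dist x y := by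
  rw [edgeCoord, edgeCoord, ← inner_sub_left, sub_sub_sub_cancel_right, dist_eq_norm]
  exact (real_inner_le_norm _ _).trans
    (mul_le_of_le_one_right (norm_nonneg _) (norm_vertex_sub_vertex_le j i))

lemma edgeCoord_le_half (i j : Fin 3) {x : E2} (hx : x ∈ Tri) : edgeCoord i j x ≤ 1 / 2 := by
  have hconvex : Convex ℝ {x | edgeCoord i j x ≤ 1 / 2} := by
    have : {x | edgeCoord i j x ≤ 1 / 2} = {x | (inner ℝ (vertex j - vertex i) x : ℝ)
        ≤ 1 / 2 + inner ℝ (vertex j - vertex i) triCentroid} := by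
      ext x
      rw [Set.mem_ofPred_eq, Set.mem_ofPred_eq, edgeCoord, real_inner_comm, inner_sub_right,
        sub_le_iff_le_add]
    rw [this]
    exact convex_halfSpace_le (innerSL ℝ (vertex j - vertex i)).isBoundedLinearMap.toIsLinearMap _
  refine Tri_subset_of_convex hconvex (fun m => ?_) hx
  rw [Set.mem_ofPred_eq, edgeCoord_vertex]
  split_ifs <;> norm_num

lemma neg_half_le_edgeCoord (i j : Fin 3) {x : E2} (hx : x ∈ Tri) : -1 / 2 ≤ edgeCoord i j x := by
  linarith [edgeCoord_le_half j i hx, edgeCoord_swap i j x]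

lemma edgeCoord_eq_two_sub_of_Smap_eq {i j : Fin 3} (hij : i ≠ j) {x y : E2}
    (hxy : Smap i x = Smap j y) : edgeCoord j i y = 2 - edgeCoord i j x := by
  have h := congrArg (edgeCoord i j) hxy
  simp only [edgeCoord_Smap, edgeCoord_vertex, if_neg hij, if_neg hij.symm, ↓reduceIte] at h
  rw [edgeCoord_swap]
  linarith

lemma norm_sub_triCentroid_sq_le {x : E2} (hx : x ∈ Tri) : ‖x - triCentroid‖ ^ 2 ≤ 1 / 3 := by
  have hball : Tri ⊆ Metric.closedBall triCentroid (Real.sqrt (1/3)) := by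
    refine Tri_subset_of_convex (convex_closedBall _ _) fun i => ?_
    rw [mem_closedBall_iff_norm]
    refine Real.le_sqrt_of_sq_le ?_
    rw [← real_inner_self_eq_norm_sq, inner_vertex_sub_triCentroid, if_pos rfl]
  have := mem_closedBall_iff_norm.1 (hball hx)
  exact (Real.le_sqrt (norm_nonneg _) (by norm_num)).1 this

/-- `Smap i` as a bijection of the plane. -/
def SmapEquiv (i : Fin 3) : E2 ≃ E2 where
  toFun := Smap i
  invFun y := (3 : ℝ) • y - (2 : ℝ) • vertex i
  left_inv x := by
    rw [Smap_eq_smul_add]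
    module
  right_inv y := by
    rw [Smap_eq_smul_add]
    module

lemma bijective_Smap (i : Fin 3) : Function.Bijective (Smap i) := (SmapEquiv i).bijective

/-- The finite set `Smap i ⁻¹' A`: the points of `A` seen in the coordinates of the `i`-th cell. -/
def pullback (i : Fin 3) (A : Finset E2) : Finset E2 := A.map (SmapEquiv i).symm.toEmbedding

lemma mem_pullback {i : Fin 3} {A : Finset E2} {b : E2} : b ∈ pullback i A ↔ Smap i b ∈ A :=
  Finset.mem_map_equiv

lemma coe_pullback (i : Fin 3) (A : Finset E2) : (pullback i A : Set E2) = Smap i ⁻¹' A := by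
  ext b
  exact mem_pullback

lemma card_pullback (i : Fin 3) (A : Finset E2) : (pullback i A).card = A.card :=
  Finset.card_map _

end Triangle

/-- The self-similarity equation of the R-measure: `P` is the average of its images in the three
cells. -/
def IsSelfSimilar (P : Measure E2) : Prop :=
  P = (3⁻¹ : ℝ≥0∞) • ∑ i, P.map (Smap i)

lemma three_mul_infDist_Smap_le (i : Fin 3) (x : E2) :
    3 * Metric.infDist (Smap i x) Tri ≤ Metric.infDist x Tri := by
  obtain ⟨y, hy, hxy⟩ := isCompact_Tri.exists_infDist_eq_dist nonempty_Tri x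
  have := Metric.infDist_le_dist_of_mem (x := Smap i x) (Smap_mem_Tri i hy)
  rw [dist_Smap_Smap] at this
  linarith

lemma IsSelfSimilar.integral_eq_of_integrable {P : Measure E2} (hP : IsSelfSimilar P) {g : E2 → ℝ}
    (hg : Continuous g) (hint : ∀ i, Integrable (fun x => g (Smap i x)) P) :
    ∫ x, g x ∂P = (1 / 3) * ∑ i, ∫ x, g (Smap i x) ∂P := by
  have hmap i : Integrable g (P.map (Smap i)) :=
    (integrable_map_measure hg.aestronglyMeasurable (continuous_Smap i).aemeasurable).2 (hint i)
  conv_lhs => rw [hP]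
  rw [integral_smul_measure, integral_finsetSum_measure fun i _ => hmap i]
  simp only [integral_map (continuous_Smap _).aemeasurable hg.aestronglyMeasurable]
  simp

namespace IsSelfSimilar

variable {P : Measure E2} [IsProbabilityMeasure P] (hP : IsSelfSimilar P)

include hP

-- The maps contract the distance to `Tri` by `3`, while self-similarity preserves the mean of any
-- bounded increasing function of that distance, such as its `arctan`.
lemma ae_mem_Tri : ∀ᵐ x ∂P, x ∈ Tri := by
  have hbdd {f : E2 → ℝ} (hf : Continuous f) : Integrable (fun x => Real.arctan (f x)) P :=
    Integrable.of_bound (by fun_prop) (Real.pi / 2)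
      (ae_of_all _ fun x => (abs_le.2 ⟨(Real.neg_pi_div_two_lt_arctan _).le,
        (Real.arctan_lt_pi_div_two _).le⟩))
  have hcont := Metric.continuous_infDist_pt Tri
  have hthird_le : (fun x => Real.arctan (Metric.infDist x Tri / 3))
      ≤ᵐ[P] fun x => Real.arctan (Metric.infDist x Tri) :=
    ae_of_all _ fun x => Real.arctan_mono (by linarith [Metric.infDist_nonneg (x := x) (s := Tri)])
  have hle_third : ∫ x, Real.arctan (Metric.infDist x Tri) ∂P
      ≤ ∫ x, Real.arctan (Metric.infDist x Tri / 3) ∂P := by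
    rw [hP.integral_eq_of_integrable (by fun_prop)
      fun i => hbdd (hcont.comp (continuous_Smap i))]
    have hcell i : ∫ x, Real.arctan (Metric.infDist (Smap i x) Tri) ∂P
        ≤ ∫ x, Real.arctan (Metric.infDist x Tri / 3) ∂P :=
      integral_mono (hbdd (hcont.comp (continuous_Smap i))) (hbdd (hcont.div_const 3))
        fun x => Real.arctan_mono (by linarith [three_mul_infDist_Smap_le i x])
    rw [Fin.sum_univ_three]
    linarith [hcell 0, hcell 1, hcell 2]
  have heq := (integral_eq_iff_of_ae_le (hbdd (hcont.div_const 3)) (hbdd hcont) hthird_le).1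
    ((integral_mono_ae (hbdd (hcont.div_const 3)) (hbdd hcont) hthird_le).antisymm hle_third)
  filter_upwards [heq] with x hx
  rw [isCompact_Tri.isClosed.mem_iff_infDist_zero nonempty_Tri]
  linarith [Real.arctan_injective hx]

lemma integrable {g : E2 → ℝ} (hg : Continuous g) : Integrable g P := by
  have := hg.continuousOn.integrableOn_compact (μ := P) isCompact_Tri
  rwa [IntegrableOn, Measure.restrict_eq_self_of_ae_mem hP.ae_mem_Tri] at this

lemma integral_eq {g : E2 → ℝ} (hg : Continuous g) :
    ∫ x, g x ∂P = (1 / 3) * ∑ i, ∫ x, g (Smap i x) ∂P :=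
  hP.integral_eq_of_integrable hg fun i => hP.integrable (hg.comp (continuous_Smap i))

lemma integral_mono {f g : E2 → ℝ} (hf : Continuous f) (hg : Continuous g)
    (hfg : ∀ x ∈ Tri, f x ≤ g x) : ∫ x, f x ∂P ≤ ∫ x, g x ∂P :=
  integral_mono_ae (hP.integrable hf) (hP.integrable hg)
    (hP.ae_mem_Tri.mono fun x hx => hfg x hx)

lemma integral_inner_sub_triCentroid (w : E2) :
    ∫ x, (inner ℝ (x - triCentroid) w : ℝ) ∂P = 0 := by
  have hcell i : ∫ x, (inner ℝ (Smap i x - triCentroid) w : ℝ) ∂P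
      = 3⁻¹ * ∫ x, (inner ℝ (x - triCentroid) w : ℝ) ∂P
        + 2 / 3 * inner ℝ (vertex i - triCentroid) w := by
    simp only [Smap_sub_triCentroid, inner_add_left, real_inner_smul_left]
    rw [integral_add (hP.integrable (by fun_prop)) (integrable_const _), integral_const_mul,
      integral_const, probReal_univ, one_smul]
  have h := hP.integral_eq (g := fun x => inner ℝ (x - triCentroid) w) (by fun_prop)
  simp only [hcell, Finset.sum_add_distrib, ← Finset.mul_sum, ← sum_inner,
    sum_vertex_sub_triCentroid, inner_zero_left, Finset.sum_const, Finset.card_univ,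
    Fintype.card_fin, nsmul_eq_mul] at h
  push_cast at h
  linarith

lemma integral_edgeCoord (i j : Fin 3) : ∫ x, edgeCoord i j x ∂P = 0 :=
  hP.integral_inner_sub_triCentroid _

lemma integral_norm_sub_sq_eq_add (b : E2) :
    ∫ x, ‖x - b‖ ^ 2 ∂P = ∫ x, ‖x - triCentroid‖ ^ 2 ∂P + ‖triCentroid - b‖ ^ 2 := by
  have hexpand x : ‖x - b‖ ^ 2 = ‖x - triCentroid‖ ^ 2
      + (2 * inner ℝ (x - triCentroid) (triCentroid - b) + ‖triCentroid - b‖ ^ 2) := by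
    conv_lhs => rw [← sub_add_sub_cancel x triCentroid b, norm_add_sq_real]
    ring
  rw [integral_congr_ae (ae_of_all _ hexpand), integral_add (hP.integrable (by fun_prop))
    (hP.integrable (by fun_prop)), integral_add (hP.integrable (by fun_prop)) (integrable_const _),
    integral_const_mul, hP.integral_inner_sub_triCentroid, integral_const, probReal_univ, one_smul]
  ring

lemma integral_norm_Smap_sub_sq_eq_add (i : Fin 3) (b : E2) :
    ∫ x, ‖Smap i x - b‖ ^ 2 ∂P
      = (1 / 9) * ∫ x, ‖x - triCentroid‖ ^ 2 ∂P + ‖Smap i triCentroid - b‖ ^ 2 := by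
  obtain ⟨b, rfl⟩ := (SmapEquiv i).surjective b
  change ∫ x, ‖Smap i x - Smap i b‖ ^ 2 ∂P = _ + ‖Smap i triCentroid - Smap i b‖ ^ 2
  simp only [Smap_sub_Smap, norm_smul, mul_pow]
  rw [integral_const_mul, hP.integral_norm_sub_sq_eq_add]
  norm_num
  ring

lemma integral_norm_sub_triCentroid_sq : ∫ x, ‖x - triCentroid‖ ^ 2 ∂P = 1 / 6 := by
  have h := hP.integral_eq (g := fun x => ‖x - triCentroid‖ ^ 2) (by fun_prop)
  simp only [hP.integral_norm_Smap_sub_sq_eq_add, norm_Smap_triCentroid_sub_sq,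
    Fin.sum_univ_three] at h
  linarith

lemma integral_norm_sub_sq (b : E2) :
    ∫ x, ‖x - b‖ ^ 2 ∂P = 1 / 6 + ‖triCentroid - b‖ ^ 2 := by
  rw [hP.integral_norm_sub_sq_eq_add, hP.integral_norm_sub_triCentroid_sq]

lemma integral_norm_Smap_sub_sq (i : Fin 3) (b : E2) :
    ∫ x, ‖Smap i x - b‖ ^ 2 ∂P = 1 / 54 + ‖Smap i triCentroid - b‖ ^ 2 := by
  rw [hP.integral_norm_Smap_sub_sq_eq_add, hP.integral_norm_sub_triCentroid_sq]
  norm_num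

end IsSelfSimilar

lemma infDist_Smap (i : Fin 3) (x : E2) (A : Set E2) :
    Metric.infDist (Smap i x) A = 3⁻¹ * Metric.infDist x (Smap i ⁻¹' A) := by
  rw [Metric.infDist_eq_iInf, Metric.infDist_eq_iInf, Real.mul_iInf_of_nonneg (by norm_num)]
  refine (Equiv.iInf_congr ((SmapEquiv i).subtypeEquiv fun _ => Iff.rfl) fun y => ?_).symm
  exact dist_Smap_Smap i x y

lemma sum_pullback (i : Fin 3) (A : Finset E2) :
    ∑ b ∈ pullback i A, b = (3 : ℝ) • ∑ a ∈ A, a - (A.card : ℝ) • (2 : ℝ) • vertex i := by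
  rw [pullback, Finset.sum_map, Finset.smul_sum, Nat.cast_smul_eq_nsmul, ← Finset.sum_const,
    ← Finset.sum_sub_distrib]
  rfl

lemma pullback_ne_pullback {i j : Fin 3} (hij : i ≠ j) {A : Finset E2} (hA : A.Nonempty) :
    pullback i A ≠ pullback j A := by
  intro heq
  have hsum := congrArg (fun B : Finset E2 => ∑ b ∈ B, b) heq
  simp only [sum_pullback] at hsum
  have hcard : (A.card : ℝ) ≠ 0 := by exact_mod_cast hA.card_pos.ne'
  have hvertex : vertex i = vertex j :=
    smul_right_injective _ two_ne_zero (smul_right_injective _ hcard (sub_right_injective hsum))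
  simpa [hvertex] using norm_vertex_sub_vertex_sq hij

namespace IsSelfSimilar

variable {P : Measure E2} [IsProbabilityMeasure P] (hP : IsSelfSimilar P)

include hP

lemma integrable_infDist_sq (A : Set E2) : Integrable (fun x => Metric.infDist x A ^ 2) P :=
  hP.integrable (by fun_prop)

lemma distortion_eq_sum_integral_Smap (A : Set E2) :
    distortion P A = (1 / 3) * ∑ i, ∫ x, Metric.infDist (Smap i x) A ^ 2 ∂P :=
  hP.integral_eq (by fun_prop)

lemma distortion_eq_sum_preimage (A : Set E2) :
    distortion P A = (1 / 27) * ∑ i, distortion P (Smap i ⁻¹' A) := by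
  rw [hP.distortion_eq_sum_integral_Smap]
  simp only [infDist_Smap, mul_pow, integral_const_mul, ← Finset.mul_sum, distortion]
  rw [← mul_assoc]
  norm_num

lemma distortion_eq_sum_pullback (A : Finset E2) :
    distortion P A = (1 / 27) * ∑ i, distortion P (pullback i A) := by
  simp only [coe_pullback, ← hP.distortion_eq_sum_preimage]

lemma ae_mem_of_distortion_eq_zero {A : Finset E2} (hA : A.Nonempty) (h : distortion P A = 0) :
    ∀ᵐ x ∂P, x ∈ A := by
  have hzero := (integral_eq_zero_iff_of_nonneg (fun _ => sq_nonneg _)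
    (hP.integrable_infDist_sq A)).1 h
  filter_upwards [hzero] with x hx
  exact (A.finite_toSet.isClosed.mem_iff_infDist_zero hA).2 (pow_eq_zero_iff two_ne_zero |>.1 hx)

-- A carrier of minimal cardinality would have the same pullback to two different cells.
lemma distortion_pos {A : Finset E2} (hA : A.Nonempty) : 0 < distortion P A := by
  induction hn : A.card using Nat.strong_induction_on generalizing A with
  | _ n ih =>
    refine (distortion_nonneg P A).lt_of_ne' fun hzero => ?_
    have hcell i : distortion P (pullback i A) = 0 := by
      have hsum := hP.distortion_eq_sum_pullback A
      rw [hzero, eq_comm, mul_eq_zero_iff_left (by norm_num)] at hsum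
      exact (Finset.sum_eq_zero_iff_of_nonneg fun _ _ => distortion_nonneg P _).1 hsum i
        (Finset.mem_univ i)
    have hne i : (pullback i A).Nonempty := (Finset.map_nonempty).2 hA
    have hboth : ∀ᵐ x ∂P, x ∈ pullback 0 A ∩ pullback 1 A := by
      filter_upwards [hP.ae_mem_of_distortion_eq_zero (hne 0) (hcell 0),
        hP.ae_mem_of_distortion_eq_zero (hne 1) (hcell 1)] with x h0 h1
      exact Finset.mem_inter.2 ⟨h0, h1⟩
    have hinter_zero : distortion P (pullback 0 A ∩ pullback 1 A : Finset E2) = 0 :=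
      integral_eq_zero_of_ae (hboth.mono fun x hx => by
        simp [-Finset.coe_inter, Metric.infDist_zero_of_mem (Finset.mem_coe.2 hx)])
    have hcard : (pullback 0 A ∩ pullback 1 A).card < n := by
      rw [← hn, ← card_pullback 0 A]
      refine Finset.card_lt_card (Finset.inter_subset_left.ssubset_of_ne fun heq => ?_)
      refine pullback_ne_pullback (by decide : (0 : Fin 3) ≠ 1) hA
        (Finset.eq_of_subset_of_card_le (Finset.inter_eq_left.1 heq) ?_)
      rw [card_pullback, card_pullback]
    exact (ih _ hcard hboth.exists rfl).ne' hinter_zero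

lemma exists_distortion_insert_lt {A : Finset E2} (hA : A.Nonempty) :
    ∃ y, distortion P (insert y A : Finset E2) < distortion P A := by
  simpa using exists_distortion_insert_lt_of_pos hA (hP.integrable_infDist_sq A)
    (hP.distortion_pos hA)

end IsSelfSimilar

/-- `A` has the least distortion among all nonempty sets of at most `n` points: the counterpart of
`IsOptimal` for finsets and the real-valued `distortion`. -/
structure IsDistortionMinimizer (P : Measure E2) (n : ℕ) (A : Finset E2) : Prop where
  nonempty : A.Nonempty
  card_le : A.card ≤ n
  distortion_le : ∀ B : Finset E2, B.Nonempty → B.card ≤ n → distortion P A ≤ distortion P B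

/-- `54` times the distortion obtained by merging the three first-level cells into `min k 3` groups,
each represented by its centroid. Meaningful for `1 ≤ k`. -/
def blockCost (k : ℕ) : ℝ := 13 - 4 * (min k 3 : ℕ)

lemma iInf_ofReal_norm_sub_sq {A : Finset E2} (hA : A.Nonempty) (x : E2) :
    ⨅ a ∈ (A : Set E2), ENNReal.ofReal (‖x - a‖ ^ 2)
      = ENNReal.ofReal (Metric.infDist x A ^ 2) := by
  refine le_antisymm ?_ (le_iInf₂ fun a ha => ENNReal.ofReal_le_ofReal ?_)
  · obtain ⟨a, ha, hxa⟩ := A.finite_toSet.isCompact.exists_infDist_eq_dist hA x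
    rw [hxa, dist_eq_norm]
    exact iInf₂_le a ha
  · exact dist_eq_norm x a ▸ infDist_sq_le_dist_sq ha x

lemma err_empty (P : Measure E2) [IsProbabilityMeasure P] : err P ∅ = ⊤ := by
  simp [err]

lemma exists_closer_of_notMem_Tri {b : E2} (hb : b ∉ Tri) :
    ∃ b', ∀ x ∈ Tri, dist x b' < dist x b := by
  obtain ⟨b', hb', hmin⟩ := exists_norm_eq_iInf_of_complete_convex nonempty_Tri
    isCompact_Tri.isComplete convex_Tri b
  rw [norm_eq_iInf_iff_real_inner_le_zero convex_Tri hb'] at hmin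
  refine ⟨b', fun x hx => ?_⟩
  have hpos : 0 < ‖b - b'‖ := norm_pos_iff.2 (sub_ne_zero.2 fun h => hb (h ▸ hb'))
  have hexpand := norm_sub_sq_real (x - b') (b - b')
  rw [sub_sub_sub_cancel_right, real_inner_comm] at hexpand
  rw [dist_eq_norm, dist_eq_norm]
  exact lt_of_pow_lt_pow_left₀ 2 (norm_nonneg _) (by nlinarith [hmin x hx])

namespace IsSelfSimilar

variable {P : Measure E2} [IsProbabilityMeasure P] (hP : IsSelfSimilar P)

include hP

lemma err_eq_ofReal_distortion {A : Finset E2} (hA : A.Nonempty) :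
    err P A = ENNReal.ofReal (distortion P A) := by
  simp only [err, iInf_ofReal_norm_sub_sq hA]
  exact (ofReal_integral_eq_lintegral_ofReal (hP.integrable_infDist_sq A)
    (ae_of_all _ fun _ => sq_nonneg _)).symm

lemma isOptimal_iff {n : ℕ} (hn : 1 ≤ n) {A : Finset E2} :
    IsOptimal P n A ↔ IsDistortionMinimizer P n A := by
  rw [IsOptimal, Set.ncard_coe_finset]
  constructor
  · rintro ⟨-, hcard, herr⟩
    have hle (B : Finset E2) (hB : B.card ≤ n) : err P A ≤ err P B :=
      herr.trans_le (iInf₂_le (B : Set E2) ⟨B.finite_toSet, by rwa [Set.ncard_coe_finset]⟩)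
    have hA : A.Nonempty := by
      rw [Finset.nonempty_iff_ne_empty]
      rintro rfl
      have := hle {triCentroid} (by simpa using hn)
      rw [Finset.coe_empty, err_empty, hP.err_eq_ofReal_distortion (Finset.singleton_nonempty _),
        top_le_iff] at this
      exact ENNReal.ofReal_ne_top this
    refine ⟨hA, hcard, fun B hB hBn => ?_⟩
    have := hle B hBn
    rwa [hP.err_eq_ofReal_distortion hA, hP.err_eq_ofReal_distortion hB,
      ENNReal.ofReal_le_ofReal_iff (distortion_nonneg _ _)] at this
  · rintro ⟨hA, hcard, hle⟩
    refine ⟨A.finite_toSet, hcard, le_antisymm (le_iInf₂ fun B hB => ?_) (iInf₂_le _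
      ⟨A.finite_toSet, by rwa [Set.ncard_coe_finset]⟩)⟩
    obtain ⟨hBfin, hBcard⟩ := hB
    lift B to Finset E2 using hBfin
    rw [Set.ncard_coe_finset] at hBcard
    rcases B.eq_empty_or_nonempty with rfl | hB
    · rw [Finset.coe_empty, err_empty]
      exact le_top
    · rw [hP.err_eq_ofReal_distortion hA, hP.err_eq_ofReal_distortion hB]
      exact ENNReal.ofReal_le_ofReal (hle B hB hBcard)

lemma distortion_mono_of_infDist_le {A B : Set E2}
    (h : ∀ x ∈ Tri, Metric.infDist x A ≤ Metric.infDist x B) : distortion P A ≤ distortion P B :=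
  hP.integral_mono (by fun_prop) (by fun_prop) fun x hx =>
    pow_le_pow_left₀ Metric.infDist_nonneg (h x hx) 2

lemma distortion_le_of_subset {A B : Finset E2} (hA : A.Nonempty) (hAB : A ⊆ B) :
    distortion P B ≤ distortion P A :=
  distortion_anti hA hAB (hP.integrable_infDist_sq A)

lemma distortion_le_of_centres {A : Finset E2} (f : Fin 3 → E2) (hf : ∀ i, f i ∈ A) :
    54 * distortion P A ≤ 1 + 18 * ∑ i, ‖Smap i triCentroid - f i‖ ^ 2 := by
  have hcell i : ∫ x, Metric.infDist (Smap i x) A ^ 2 ∂P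
      ≤ 1 / 54 + ‖Smap i triCentroid - f i‖ ^ 2 := by
    rw [← hP.integral_norm_Smap_sub_sq]
    have := continuous_Smap i
    exact hP.integral_mono (by fun_prop) (by fun_prop) fun x _ =>
      dist_eq_norm (Smap i x) (f i) ▸ infDist_sq_le_dist_sq (hf i) _
  have hsum := Finset.sum_le_sum fun i (_ : i ∈ Finset.univ) => hcell i
  rw [Finset.sum_add_distrib, Finset.sum_const, Finset.card_univ, Fintype.card_fin] at hsum
  rw [hP.distortion_eq_sum_integral_Smap]
  norm_num at hsum ⊢
  linarith

lemma exists_distortion_le_blockCost {k : ℕ} (hk : 1 ≤ k) :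
    ∃ A : Finset E2, A.Nonempty ∧ A.card ≤ k ∧ 54 * distortion P A ≤ blockCost k := by
  classical
  obtain rfl | rfl | hk : k = 1 ∨ k = 2 ∨ 3 ≤ k := by omega
  · refine ⟨{triCentroid}, Finset.singleton_nonempty _, by simp, ?_⟩
    refine (hP.distortion_le_of_centres (fun _ => triCentroid) (by simp)).trans ?_
    simp only [norm_Smap_triCentroid_sub_sq, Fin.sum_univ_three, blockCost]
    norm_num
  · set M := midpoint ℝ (Smap 1 triCentroid) (Smap 2 triCentroid)
    refine ⟨{Smap 0 triCentroid, M}, Finset.insert_nonempty _ _, Finset.card_le_two, ?_⟩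
    refine (hP.distortion_le_of_centres ![Smap 0 triCentroid, M, M] fun i => ?_).trans ?_
    · fin_cases i <;> simp
    · have hdiff := norm_Smap_sub_Smap_sq (by decide : (1 : Fin 3) ≠ 2) triCentroid
      have hleft : ‖Smap 1 triCentroid - M‖ ^ 2 = 1 / 9 := by
        rw [← dist_eq_norm, dist_left_midpoint, dist_eq_norm, mul_pow, hdiff]
        norm_num
      have hright : ‖Smap 2 triCentroid - M‖ ^ 2 = 1 / 9 := by
        rw [← dist_eq_norm, dist_right_midpoint, dist_eq_norm, mul_pow, hdiff]
        norm_num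
      simp only [Fin.sum_univ_three, Matrix.cons_val, sub_self, norm_zero, hleft, hright, blockCost]
      norm_num
  · refine ⟨Finset.univ.image fun i => Smap i triCentroid, by simp, ?_, ?_⟩
    · exact Finset.card_image_le.trans (by simpa using hk)
    · refine (hP.distortion_le_of_centres (fun i => Smap i triCentroid) (by simp)).trans ?_
      simp only [sub_self, norm_zero, blockCost, min_eq_right hk]
      norm_num

end IsSelfSimilar

namespace IsDistortionMinimizer

variable {P : Measure E2} [IsProbabilityMeasure P] {n : ℕ} {α : Finset E2}

lemma sum_distortion_pullback_le (hα : IsDistortionMinimizer P n α) (hP : IsSelfSimilar P)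
    {B : Fin 3 → Finset E2} (hB : ∀ i, (B i).Nonempty) (hcard : ∑ i, (B i).card ≤ n) :
    ∑ i, distortion P (pullback i α) ≤ ∑ i, distortion P (B i) := by
  classical
  set C := Finset.univ.biUnion fun i => (B i).map (SmapEquiv i).toEmbedding
  have hsub i : B i ⊆ pullback i C := fun b hb => mem_pullback.2 <|
    Finset.mem_biUnion.2 ⟨i, Finset.mem_univ i, Finset.mem_map_of_mem _ hb⟩
  have hCcard : C.card ≤ n := by
    refine Finset.card_biUnion_le.trans ?_
    simpa only [Finset.card_map] using hcard
  have hCne : C.Nonempty := Finset.map_nonempty.1 ((hB 0).mono (hsub 0))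
  have hαC := hα.distortion_le C hCne hCcard
  rw [hP.distortion_eq_sum_pullback, hP.distortion_eq_sum_pullback C] at hαC
  calc ∑ i, distortion P (pullback i α) ≤ ∑ i, distortion P (pullback i C) := by linarith
    _ ≤ ∑ i, distortion P (B i) :=
      Finset.sum_le_sum fun i _ => hP.distortion_le_of_subset (hB i) (hsub i)

lemma distortion_lt_erase (hα : IsDistortionMinimizer P n α) (hP : IsSelfSimilar P) {b : E2}
    (hb : b ∈ α) (hne : (α.erase b).Nonempty) : distortion P α < distortion P (α.erase b) := by
  obtain ⟨y, hy⟩ := hP.exists_distortion_insert_lt hne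
  refine (hα.distortion_le _ (Finset.insert_nonempty _ _) ?_).trans_lt hy
  exact ((Finset.card_insert_le _ _).trans_eq (Finset.card_erase_add_one hb)).trans hα.card_le

-- Moving `b` to its projection `b'` onto `Tri` cannot increase the distortion, so by optimality it
-- leaves the distortion unchanged.
lemma ae_exists_nearest_mem_erase (hα : IsDistortionMinimizer P n α) (hP : IsSelfSimilar P) {b : E2}
    (hb : b ∈ α) (hbT : b ∉ Tri) :
    ∀ᵐ x ∂P, ∃ a ∈ α.erase b, Metric.infDist x α = dist x a := by
  obtain ⟨b', hb'⟩ := exists_closer_of_notMem_Tri hbT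
  have hnearest x : ∃ a ∈ α, Metric.infDist x α = dist x a :=
    α.finite_toSet.isCompact.exists_infDist_eq_dist hα.nonempty x
  set β := insert b' (α.erase b)
  have hβα x (hx : x ∈ Tri) : Metric.infDist x β ≤ Metric.infDist x α := by
    obtain ⟨a, ha, hxa⟩ := hnearest x
    rw [hxa]
    by_cases hab : a = b
    · exact (Metric.infDist_le_dist_of_mem (Finset.mem_insert_self _ _)).trans (hab ▸ (hb' x hx).le)
    · exact Metric.infDist_le_dist_of_mem
        (Finset.mem_insert_of_mem (Finset.mem_erase.2 ⟨hab, ha⟩))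
  have hαβ : distortion P α ≤ distortion P β := hα.distortion_le _ (Finset.insert_nonempty _ _)
    (((Finset.card_insert_le _ _).trans_eq (Finset.card_erase_add_one hb)).trans hα.card_le)
  have heq := (integral_eq_iff_of_ae_le (hP.integrable_infDist_sq β) (hP.integrable_infDist_sq α)
    (hP.ae_mem_Tri.mono fun x hx => pow_le_pow_left₀ Metric.infDist_nonneg (hβα x hx) 2)).1
    ((hP.distortion_mono_of_infDist_le hβα).antisymm hαβ)
  filter_upwards [heq, hP.ae_mem_Tri] with x hx hxT
  obtain ⟨a, ha, hxa⟩ := hnearest x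
  refine ⟨a, Finset.mem_erase.2 ⟨?_, ha⟩, hxa⟩
  rintro rfl
  have := infDist_sq_le_dist_sq (Finset.mem_insert_self b' (α.erase a)) x
  refine (pow_lt_pow_left₀ (hb' x hxT) dist_nonneg two_ne_zero).not_ge ?_
  rw [← hxa, ← hx]
  exact this

lemma subset_Tri (hα : IsDistortionMinimizer P n α) (hP : IsSelfSimilar P) :
    (α : Set E2) ⊆ Tri := by
  intro b hb
  by_contra hbT
  have hnearest := hα.ae_exists_nearest_mem_erase hP hb hbT
  obtain ⟨-, a, ha, -⟩ := hnearest.exists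
  refine (hα.distortion_lt_erase hP hb ⟨a, ha⟩).not_ge ?_
  refine integral_mono_ae (hP.integrable_infDist_sq _) (hP.integrable_infDist_sq _) ?_
  filter_upwards [hnearest] with x ⟨a, ha, hxa⟩
  exact hxa ▸ infDist_sq_le_dist_sq ha x

end IsDistortionMinimizer

/-- How much the point `b` can lower the cost of the `m`-th cell below the ceiling `2/9`, which is
half the squared distance between corresponding points of two cells. -/
def cellSaving (P : Measure E2) (m : Fin 3) (b : E2) : ℝ :=
  ∫ x, max 0 (2 / 9 - dist (Smap m x) b ^ 2) ∂P

/-- The directions `j` in which `b`, seen in the frame of the `i`-th cell, strays so far from the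
cell that it can serve little of it. -/
def strayDirections (i : Fin 3) (b : E2) : Finset (Fin 3) := {j | 7 / 10 ≤ edgeCoord i j b}

lemma mem_strayDirections {i j : Fin 3} {b : E2} :
    j ∈ strayDirections i b ↔ 7 / 10 ≤ edgeCoord i j b := by
  simp [strayDirections]

lemma le_dist_of_le_edgeCoord {i j : Fin 3} {b x : E2} {R : ℝ} (hb : R + 1 / 2 ≤ edgeCoord i j b)
    (hx : x ∈ Tri) : R ≤ dist x b := by
  rw [dist_comm]
  linarith [edgeCoord_sub_le_dist i j b x, edgeCoord_le_half i j hx]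

lemma ne_of_mem_strayDirections {i j : Fin 3} {b : E2} (hj : j ∈ strayDirections i b) : i ≠ j :=
  ne_of_edgeCoord_pos (by linarith [mem_strayDirections.1 hj])

lemma two_ninths_le_dist_Smap_sq {i j m : Fin 3} {b x : E2} (hj : j ∈ strayDirections i b)
    (hmj : m ≠ j) (hx : x ∈ Tri) : 2 / 9 ≤ dist (Smap m x) b ^ 2 := by
  have hcell : edgeCoord i j (Smap m x) ≤ 1 / 6 := by
    rw [edgeCoord_Smap, edgeCoord_vertex, if_neg hmj]
    have := edgeCoord_le_half i j hx
    split_ifs <;> linarith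
  have hdist : 8 / 15 ≤ dist (Smap m x) b := by
    rw [dist_comm]
    linarith [edgeCoord_sub_le_dist i j b (Smap m x), mem_strayDirections.1 hj]
  nlinarith

lemma max_two_ninths_sub_dist_sq_le {i j : Fin 3} {b x : E2} (hj : j ∈ strayDirections i b)
    (hx : x ∈ Tri) :
    max 0 (2 / 9 - dist (Smap j x) b ^ 2) ≤ 73 / 720 + edgeCoord i j x / 6 := by
  have hcell : edgeCoord i j (Smap j x) = edgeCoord i j x / 3 + 1 / 3 := by
    rw [edgeCoord_Smap, edgeCoord_vertex, if_pos rfl,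
      if_neg (ne_of_mem_strayDirections hj).symm]
    norm_num
  have hdist : 11 / 30 - edgeCoord i j x / 3 ≤ dist (Smap j x) b := by
    rw [dist_comm]
    linarith [edgeCoord_sub_le_dist i j b (Smap j x), mem_strayDirections.1 hj]
  refine max_le (by linarith [neg_half_le_edgeCoord i j hx]) ?_
  nlinarith [edgeCoord_le_half i j hx, sq_nonneg (dist (Smap j x) b - 1 / 4)]

namespace IsSelfSimilar

variable {P : Measure E2} [IsProbabilityMeasure P] (hP : IsSelfSimilar P)

include hP

lemma integrable_cellSaving (m : Fin 3) (b : E2) :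
    Integrable (fun x => max 0 (2 / 9 - dist (Smap m x) b ^ 2)) P := by
  have := continuous_Smap m
  exact hP.integrable (by fun_prop)

lemma sum_cellSaving_le (M : Finset (Fin 3)) (b : E2) : ∑ m ∈ M, cellSaving P m b ≤ 2 / 9 := by
  simp only [cellSaving]
  rw [← integral_finsetSum _ fun m _ => hP.integrable_cellSaving m b]
  have hpointwise x : ∑ m ∈ M, max 0 (2 / 9 - dist (Smap m x) b ^ 2) ≤ 2 / 9 := by
    simp only [dist_eq_norm]
    refine sum_max_sub_norm_sub_sq_le (by norm_num) (fun i _ j _ hij => ?_) b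
    rw [norm_Smap_sub_Smap_sq hij]
    norm_num
  calc _ ≤ ∫ _, (2 / 9 : ℝ) ∂P := MeasureTheory.integral_mono
        (integrable_finsetSum _ fun m _ => hP.integrable_cellSaving m b) (integrable_const _)
        hpointwise
    _ = 2 / 9 := by simp

lemma cellSaving_eq_zero {i j m : Fin 3} {b : E2} (hj : j ∈ strayDirections i b) (hmj : m ≠ j) :
    cellSaving P m b = 0 :=
  integral_eq_zero_of_ae (hP.ae_mem_Tri.mono fun x hx => max_eq_left <| by
    linarith [two_ninths_le_dist_Smap_sq hj hmj hx])

lemma cellSaving_le {i j : Fin 3} {b : E2} (hj : j ∈ strayDirections i b) :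
    cellSaving P j b ≤ 73 / 720 := by
  have hcont : Continuous (edgeCoord i j) := by
    unfold edgeCoord
    fun_prop
  calc cellSaving P j b ≤ ∫ x, (73 / 720 + edgeCoord i j x / 6) ∂P :=
        integral_mono_ae (hP.integrable_cellSaving j b) (hP.integrable (by fun_prop))
          (hP.ae_mem_Tri.mono fun x hx => max_two_ninths_sub_dist_sq_le hj hx)
    _ = 73 / 720 := by
      rw [integral_add (integrable_const _) (hP.integrable (by fun_prop)), integral_const,
        probReal_univ, one_smul, integral_div, hP.integral_edgeCoord, zero_div, add_zero]

lemma two_ninths_sub_sum_cellSaving_le {A K : Finset E2} (hA : A.Nonempty)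
    (hfar : ∀ a ∈ A, a ∉ K → ∀ x ∈ Tri, 1 / 2 ≤ dist x a) (m : Fin 3) :
    2 / 9 - ∑ b ∈ K, cellSaving P m b ≤ ∫ x, Metric.infDist (Smap m x) A ^ 2 ∂P := by
  have hint := integrable_finsetSum K fun b _ => hP.integrable_cellSaving m b
  have := continuous_Smap m
  calc 2 / 9 - ∑ b ∈ K, cellSaving P m b
      = ∫ x, (2 / 9 - ∑ b ∈ K, max 0 (2 / 9 - dist (Smap m x) b ^ 2)) ∂P := by
        rw [integral_sub (integrable_const _) hint, integral_const, probReal_univ, one_smul,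
          integral_finsetSum _ fun b _ => hP.integrable_cellSaving m b]
        rfl
    _ ≤ ∫ x, Metric.infDist (Smap m x) A ^ 2 ∂P := by
        refine integral_mono_ae ((integrable_const _).sub hint) (hP.integrable (by fun_prop))
          (hP.ae_mem_Tri.mono fun x hx => sub_sum_max_le_infDist_sq hA fun a ha haK => ?_)
        nlinarith [hfar a ha haK _ (Smap_mem_Tri m hx)]

lemma sub_card_le_sum_integral {A K : Finset E2} (hA : A.Nonempty)
    (hfar : ∀ a ∈ A, a ∉ K → ∀ x ∈ Tri, 1 / 2 ≤ dist x a) (M : Finset (Fin 3)) :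
    2 / 9 * (M.card - K.card : ℝ) ≤ ∑ m ∈ M, ∫ x, Metric.infDist (Smap m x) A ^ 2 ∂P := by
  calc 2 / 9 * (M.card - K.card : ℝ)
      ≤ ∑ m ∈ M, (2 / 9 - ∑ b ∈ K, cellSaving P m b) := by
        rw [Finset.sum_sub_distrib, Finset.sum_comm, Finset.sum_const, nsmul_eq_mul]
        have := Finset.sum_le_card_nsmul K _ _ fun b _ => hP.sum_cellSaving_le M b
        rw [nsmul_eq_mul] at this
        linarith
    _ ≤ _ := Finset.sum_le_sum fun m _ => hP.two_ninths_sub_sum_cellSaving_le hA hfar m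

end IsSelfSimilar

lemma card_strayDirections_le (i : Fin 3) (b : E2) : (strayDirections i b).card ≤ 2 := by
  have hsub : strayDirections i b ⊆ {i}ᶜ := fun j hj => by
    simpa using (ne_of_mem_strayDirections hj).symm
  exact (Finset.card_le_card hsub).trans_eq (by simp [Finset.card_compl])

namespace IsSelfSimilar

variable {P : Measure E2} [IsProbabilityMeasure P] (hP : IsSelfSimilar P)

include hP

lemma sum_cellSaving_add_card_le_of_nonempty {i : Fin 3} {b : E2}
    (hb : (strayDirections i b).Nonempty) :
    18 * ∑ m, cellSaving P m b + (strayDirections i b).card ≤ 4 - 11 / 10 := by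
  obtain ⟨j, hj⟩ := hb
  have hsum : ∑ m, cellSaving P m b = cellSaving P j b :=
    Fintype.sum_eq_single j fun m hmj => hP.cellSaving_eq_zero hj hmj
  rw [hsum]
  by_cases hone : (strayDirections i b).card ≤ 1
  · have : ((strayDirections i b).card : ℝ) ≤ 1 := by exact_mod_cast hone
    linarith [hP.cellSaving_le hj]
  · obtain ⟨j', hj', hne⟩ := Finset.exists_mem_ne (not_le.1 hone) j
    have : ((strayDirections i b).card : ℝ) ≤ 2 := by exact_mod_cast card_strayDirections_le i b
    rw [hP.cellSaving_eq_zero hj' hne.symm]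
    linarith

lemma sum_cellSaving_add_card_le (i : Fin 3) (b : E2) :
    18 * ∑ m, cellSaving P m b + (strayDirections i b).card ≤ 4 := by
  rcases (strayDirections i b).eq_empty_or_nonempty with hb | hb
  · rw [hb, Finset.card_empty, Nat.cast_zero]
    linarith [hP.sum_cellSaving_le Finset.univ b]
  · linarith [hP.sum_cellSaving_add_card_le_of_nonempty hb]

lemma integral_dist_sq_le {y : E2} (hy : y ∈ Tri) : ∫ x, dist x y ^ 2 ∂P ≤ (3 / 4) ^ 2 := by
  simp only [dist_eq_norm]
  rw [hP.integral_norm_sub_sq, norm_sub_rev]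
  linarith [norm_sub_triCentroid_sq_le hy]

lemma sq_le_distortion_of_le_infDist {A : Set E2} {y : E2} (hy : y ∈ Tri) {R : ℝ} (hR : 3 / 4 ≤ R)
    (hole : R ≤ Metric.infDist y A) : (R - 3 / 4) ^ 2 ≤ distortion P A :=
  sq_sub_le_distortion_of_le_infDist (by norm_num) hR hole (hP.integrable_infDist_sq A)
    (hP.integrable (by fun_prop)) (hP.integral_dist_sq_le hy)

section Frame

variable {A K : Finset E2} (hA : A.Nonempty)

include hA

lemma sub_card_le_distortion (hfar : ∀ a ∈ A, a ∉ K → ∀ x ∈ Tri, 1 / 2 ≤ dist x a) :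
    12 - 4 * (K.card : ℝ) ≤ 54 * distortion P A := by
  have := hP.sub_card_le_sum_integral hA hfar Finset.univ
  rw [hP.distortion_eq_sum_integral_Smap]
  norm_num at this ⊢
  linarith

lemma lt_distortion_of_stray (hfar : ∀ a ∈ A, a ∉ K → ∀ x ∈ Tri, 1 / 2 ≤ dist x a) {i : Fin 3}
    (hstray : (K.biUnion (strayDirections i)).Nonempty) :
    13 - 4 * (K.card : ℝ) + (K.biUnion (strayDirections i)).card < 54 * distortion P A := by
  obtain ⟨j, hj⟩ := hstray
  obtain ⟨b, hb, hjb⟩ := Finset.mem_biUnion.1 hj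
  set cost := fun b => 18 * ∑ m, cellSaving P m b + (strayDirections i b).card
  have hcost : ∑ b ∈ K, cost b ≤ 4 * K.card - 11 / 10 := by
    have hrest := Finset.sum_le_card_nsmul (K.erase b) cost 4
      fun b _ => hP.sum_cellSaving_add_card_le i b
    rw [nsmul_eq_mul, Finset.cast_card_erase_of_mem hb] at hrest
    rw [← Finset.add_sum_erase K cost hb]
    linarith [hP.sum_cellSaving_add_card_le_of_nonempty ⟨j, hjb⟩]
  have hcard : ((K.biUnion (strayDirections i)).card : ℝ)
      ≤ ∑ b ∈ K, ((strayDirections i b).card : ℝ) := by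
    exact_mod_cast Finset.card_biUnion_le
  have hsplit : ∑ b ∈ K, cost b = 18 * ∑ m, ∑ b ∈ K, cellSaving P m b
      + ∑ b ∈ K, ((strayDirections i b).card : ℝ) := by
    rw [Finset.sum_add_distrib, ← Finset.mul_sum, Finset.sum_comm]
  have hlower := Finset.sum_le_sum fun m (_ : m ∈ Finset.univ) =>
    hP.two_ninths_sub_sum_cellSaving_le hA hfar m
  rw [Finset.sum_sub_distrib, Finset.sum_const, Finset.card_fin] at hlower
  rw [hP.distortion_eq_sum_integral_Smap]
  norm_num at hlower ⊢
  linarith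

lemma le_distortion_of_hole (hfar : ∀ a ∈ A, a ∉ K → ∀ x ∈ Tri, 1 / 2 ≤ dist x a) {R : ℝ}
    (hR : 1 / 4 ≤ R) {h : Fin 3} {y : E2} (hy : y ∈ Tri)
    (hole : R ≤ Metric.infDist (Smap h y) A) :
    2 * (3 * R - 3 / 4) ^ 2 + 4 * (2 - (min K.card 2 : ℕ)) ≤ 54 * distortion P A := by
  have hcell : (3 * R - 3 / 4) ^ 2 ≤ 9 * ∫ x, Metric.infDist (Smap h x) A ^ 2 ∂P := by
    have := hP.sq_le_distortion_of_le_infDist hy (R := 3 * R) (by linarith)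
      (by linarith [infDist_Smap h y A])
    refine this.trans_eq ?_
    simp only [infDist_Smap, mul_pow, integral_const_mul, distortion]
    ring
  have hothers := hP.sub_card_le_sum_integral hA hfar {h}ᶜ
  have hnonneg : 0 ≤ ∑ m ∈ {h}ᶜ, ∫ x, Metric.infDist (Smap m x) A ^ 2 ∂P :=
    Finset.sum_nonneg fun m _ => integral_nonneg fun _ => sq_nonneg _
  rw [Finset.card_compl, Finset.card_singleton, Fintype.card_fin] at hothers
  rw [hP.distortion_eq_sum_integral_Smap, Fintype.sum_eq_add_sum_compl h]
  rcases min_cases K.card 2 with ⟨hmin, -⟩ | ⟨hmin, -⟩ <;> rw [hmin] <;> norm_num at hothers ⊢ <;>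
    linarith

end Frame

lemma distortion_eq_or_exists_hole {A K : Finset E2} (hK : K.Nonempty) (hKA : K ⊆ A) {R : ℝ}
    (hfar : ∀ a ∈ A, a ∉ K → ∀ x ∈ Tri, R ≤ dist x a) :
    distortion P A = distortion P K ∨ ∃ h, ∃ y ∈ Tri, R ≤ Metric.infDist (Smap h y) A := by
  by_cases! hole : ∃ h, ∃ y ∈ Tri, R ≤ Metric.infDist (Smap h y) A
  · exact Or.inr hole
  refine Or.inl ((hP.distortion_le_of_subset hK hKA).antisymm ?_)
  rw [hP.distortion_eq_sum_integral_Smap, hP.distortion_eq_sum_integral_Smap A]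
  have hcont := continuous_Smap
  refine mul_le_mul_of_nonneg_left (Finset.sum_le_sum fun m _ => hP.integral_mono (by fun_prop)
    (by fun_prop) fun x hx => ?_) (by norm_num)
  obtain ⟨a, ha, hxa⟩ := A.finite_toSet.isCompact.exists_infDist_eq_dist (hK.mono hKA) (Smap m x)
  have haK : a ∈ K := by
    by_contra haK
    exact (hfar a ha haK _ (Smap_mem_Tri m hx)).not_gt (hxa ▸ hole m x hx)
  exact hxa ▸ infDist_sq_le_dist_sq haK (Smap m x)

lemma distortion_eq_or_blockCost_lt {A K : Finset E2} (hK : K.Nonempty) (hKA : K ⊆ A)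
    (hfar : ∀ a ∈ A, a ∉ K → ∀ x ∈ Tri, 4 / 5 ≤ dist x a) :
    distortion P A = distortion P K ∨ blockCost K.card < 54 * distortion P A := by
  refine (hP.distortion_eq_or_exists_hole hK hKA hfar).imp_right ?_
  rintro ⟨h, y, hy, hole⟩
  refine lt_of_lt_of_le ?_ (hP.le_distortion_of_hole (hK.mono hKA) (K := K)
    (fun a ha haK x hx => by linarith [hfar a ha haK x hx]) (by norm_num) hy hole)
  have := hK.card_pos
  obtain hk | hk | hk : K.card = 1 ∨ K.card = 2 ∨ 3 ≤ K.card := by omega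
  · norm_num [blockCost, hk]
  · norm_num [blockCost, hk]
  · norm_num [blockCost, min_eq_right hk, min_eq_right (by omega : 2 ≤ K.card)]

lemma distortion_eq_or_blockCost_lt_of_three_le_card {A K : Finset E2} (hK : 3 ≤ K.card)
    (hKA : K ⊆ A) (hfar : ∀ a ∈ A, a ∉ K → ∀ x ∈ Tri, 1 / 2 ≤ dist x a) :
    distortion P A = distortion P K ∨ blockCost K.card < 54 * distortion P A := by
  have hKne : K.Nonempty := Finset.card_pos.1 (by omega)
  refine (hP.distortion_eq_or_exists_hole hKne hKA hfar).imp_right ?_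
  rintro ⟨h, y, hy, hole⟩
  refine lt_of_lt_of_le ?_ (hP.le_distortion_of_hole (hKne.mono hKA) hfar (by norm_num) hy hole)
  norm_num [blockCost, min_eq_right hK, min_eq_right (by omega : 2 ≤ K.card)]

lemma lt_distortion_of_forall_one_le_edgeCoord {A : Finset E2} {i : Fin 3}
    (hA : A.Nonempty) (hfar : ∀ a ∈ A, ∃ j, 1 ≤ edgeCoord i j a) : 27 < 54 * distortion P A := by
  have hole : 3 / 2 ≤ Metric.infDist (vertex i) (A : Set E2) := by
    refine (Metric.le_infDist hA).2 fun a ha => ?_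
    obtain ⟨j, hj⟩ := hfar a ha
    have hij : i ≠ j := ne_of_edgeCoord_pos (by linarith : 0 < edgeCoord i j a)
    have hvertex : edgeCoord i j (vertex i) = -1 / 2 := by
      rw [edgeCoord_vertex, if_neg hij, if_pos rfl]
      norm_num
    rw [dist_comm]
    linarith [edgeCoord_sub_le_dist i j a (vertex i)]
  have := hP.sq_le_distortion_of_le_infDist (vertex_mem_Tri i) (by norm_num) hole
  norm_num at this
  linarith

end IsSelfSimilar

lemma exists_forall_edgeCoord_nonpos (a : E2) : ∃ i, ∀ j, edgeCoord i j a ≤ 0 := by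
  obtain ⟨i, hi⟩ := Finite.exists_max fun i => (inner ℝ (a - triCentroid) (vertex i) : ℝ)
  exact ⟨i, fun j => by rw [edgeCoord, inner_sub_right]; exact sub_nonpos.2 (hi j)⟩

/-- The index of a vertex of `Tri` nearest to `a`; ties are broken by choice. -/
def nearestVertex (a : E2) : Fin 3 := (exists_forall_edgeCoord_nonpos a).choose

lemma edgeCoord_nearestVertex_nonpos (a : E2) (j : Fin 3) : edgeCoord (nearestVertex a) j a ≤ 0 :=
  (exists_forall_edgeCoord_nonpos a).choose_spec j

/-- The points of `α` assigned to the `i`-th cell, namely those with nearest vertex `vertex i`, in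
the coordinates of that cell. -/
def assignedPart (α : Finset E2) (i : Fin 3) : Finset E2 :=
  pullback i {a ∈ α | nearestVertex a = i}

/-- The cells toward which some point assigned to the `i`-th cell strays. -/
def strayTargets (α : Finset E2) (i : Fin 3) : Finset (Fin 3) :=
  (assignedPart α i).biUnion (strayDirections i)

/-- The charge on the `i`-th cell when each cell pays one unit to every cell toward which one of its
points strays: the number of cells it pays minus the number of cells that pay it. -/
def strayCharge (α : Finset E2) (i : Fin 3) : ℝ :=
  (strayTargets α i).card - Finset.card {j | i ∈ strayTargets α j}

section Assignment

variable {α : Finset E2} {i j : Fin 3} {b : E2}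

lemma mem_assignedPart : b ∈ assignedPart α i ↔ Smap i b ∈ α ∧ nearestVertex (Smap i b) = i := by
  rw [assignedPart, mem_pullback, Finset.mem_filter]

lemma assignedPart_subset_pullback : assignedPart α i ⊆ pullback i α := fun _ hb =>
  mem_pullback.2 (mem_assignedPart.1 hb).1

lemma sum_card_assignedPart (α : Finset E2) : ∑ i, (assignedPart α i).card = α.card := by
  simp only [assignedPart, card_pullback]
  exact (Finset.card_eq_sum_card_fiberwise fun a _ => Finset.mem_coe.2 (Finset.mem_univ _)).symm

lemma exists_eq_of_notMem_assignedPart (hb : b ∈ pullback i α) (hbi : b ∉ assignedPart α i) :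
    ∃ j, ∃ b' ∈ assignedPart α j, i ≠ j ∧ Smap i b = Smap j b' := by
  set j := nearestVertex (Smap i b)
  obtain ⟨b', hb'⟩ := (SmapEquiv j).surjective (Smap i b)
  change Smap j b' = Smap i b at hb'
  have hbα := mem_pullback.1 hb
  refine ⟨j, b', mem_assignedPart.2 (hb' ▸ ⟨hbα, rfl⟩), fun hij => ?_, hb'.symm⟩
  exact hbi (mem_assignedPart.2 ⟨hbα, hij.symm⟩)

lemma edgeCoord_le_one_of_mem_assignedPart (hb : b ∈ assignedPart α i) (hij : i ≠ j) :
    edgeCoord i j b ≤ 1 := by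
  have h := edgeCoord_nearestVertex_nonpos (Smap i b) j
  rw [(mem_assignedPart.1 hb).2, edgeCoord_Smap, edgeCoord_vertex, if_neg hij, if_pos rfl] at h
  linarith

lemma exists_one_le_edgeCoord (hb : b ∈ pullback i α) (hbi : b ∉ assignedPart α i) :
    ∃ j, 1 ≤ edgeCoord i j b := by
  obtain ⟨j, b', hb', hij, heq⟩ := exists_eq_of_notMem_assignedPart hb hbi
  refine ⟨j, ?_⟩
  linarith [edgeCoord_eq_two_sub_of_Smap_eq hij.symm heq.symm,
    edgeCoord_le_one_of_mem_assignedPart hb' hij.symm]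

lemma half_le_dist_of_notMem_assignedPart (hb : b ∈ pullback i α) (hbi : b ∉ assignedPart α i)
    {x : E2} (hx : x ∈ Tri) : 1 / 2 ≤ dist x b := by
  obtain ⟨j, hj⟩ := exists_one_le_edgeCoord hb hbi
  exact le_dist_of_le_edgeCoord (i := i) (j := j) (by linarith) hx

lemma four_fifths_le_dist_of_notMem_assignedPart (hstray : ∀ j, i ∉ strayTargets α j)
    (hb : b ∈ pullback i α) (hbi : b ∉ assignedPart α i) {x : E2} (hx : x ∈ Tri) :
    4 / 5 ≤ dist x b := by
  obtain ⟨j, b', hb', hij, heq⟩ := exists_eq_of_notMem_assignedPart hb hbi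
  have hnear : edgeCoord j i b' < 7 / 10 := by
    by_contra! h
    exact hstray j (Finset.mem_biUnion.2 ⟨b', hb', mem_strayDirections.2 h⟩)
  exact le_dist_of_le_edgeCoord (i := i) (j := j)
    (by linarith [edgeCoord_eq_two_sub_of_Smap_eq hij.symm heq.symm]) hx

lemma sum_strayCharge (α : Finset E2) : ∑ i, strayCharge α i = 0 := by
  have h := Finset.sum_card_bipartiteAbove_eq_sum_card_bipartiteBelow (s := Finset.univ)
    (t := Finset.univ) fun i j => j ∈ strayTargets α i
  simp only [Finset.bipartiteAbove, Finset.bipartiteBelow, Finset.filter_univ_mem] at h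
  simp only [strayCharge, Finset.sum_sub_distrib, sub_eq_zero]
  exact_mod_cast h

end Assignment

namespace IsDistortionMinimizer

variable {P : Measure E2} [IsProbabilityMeasure P] {n : ℕ} {α : Finset E2}
  (hα : IsDistortionMinimizer P n α) (hP : IsSelfSimilar P)

include hα hP

lemma sum_distortion_pullback_le_of_card_le {γ : Fin 3 → Finset E2} (hγ : ∀ i, (γ i).Nonempty)
    (hcard : ∀ i, (γ i).card ≤ (assignedPart α i).card) :
    ∑ i, distortion P (pullback i α) ≤ ∑ i, distortion P (γ i) :=
  hα.sum_distortion_pullback_le hP hγ <| (Finset.sum_le_sum fun i _ => hcard i).trans <|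
    (sum_card_assignedPart α).trans_le hα.card_le

lemma distortion_pullback_eq {γ : Fin 3 → Finset E2} (hγ : ∀ i, (γ i).Nonempty)
    (hcard : ∀ i, (γ i).card ≤ (assignedPart α i).card) {c : Fin 3 → ℝ} (hc : ∑ i, c i = 0)
    (hle : ∀ i, 54 * distortion P (γ i) + c i ≤ 54 * distortion P (pullback i α)) (i : Fin 3) :
    54 * distortion P (γ i) + c i = 54 * distortion P (pullback i α) := by
  refine (Finset.sum_eq_sum_iff_of_le fun i _ => hle i).1 ?_ i (Finset.mem_univ i)
  refine (Finset.sum_le_sum fun i _ => hle i).antisymm ?_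
  rw [Finset.sum_add_distrib, hc, add_zero, ← Finset.mul_sum, ← Finset.mul_sum]
  linarith [hα.sum_distortion_pullback_le_of_card_le hP hγ hcard]

lemma sum_distortion_le_sum_blockCost {k : Fin 3 → ℕ} (hk : ∀ i, 1 ≤ k i) (hkn : ∑ i, k i ≤ n) :
    ∑ i, 54 * distortion P (pullback i α) ≤ ∑ i, blockCost (k i) := by
  choose B hBne hBcard hBcost using fun i => hP.exists_distortion_le_blockCost (hk i)
  refine le_trans ?_ (Finset.sum_le_sum fun i _ => hBcost i)
  rw [← Finset.mul_sum, ← Finset.mul_sum]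
  linarith [hα.sum_distortion_pullback_le hP hBne
    ((Finset.sum_le_sum fun i _ => hBcard i).trans hkn)]

lemma sub_card_assignedPart_le (i : Fin 3) :
    12 - 4 * ((assignedPart α i).card : ℝ) ≤ 54 * distortion P (pullback i α) :=
  hP.sub_card_le_distortion (Finset.map_nonempty.2 hα.nonempty)
    fun _ ha haK _ hx => half_le_dist_of_notMem_assignedPart ha haK hx

lemma assignedPart_nonempty (hn : 3 ≤ n) (i : Fin 3) : (assignedPart α i).Nonempty := by
  by_contra! hempty
  have hlarge : 27 < 54 * distortion P (pullback i α) :=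
    hP.lt_distortion_of_forall_one_le_edgeCoord (i := i) (Finset.map_nonempty.2 hα.nonempty)
      fun a ha => exists_one_le_edgeCoord ha (by simp [hempty])
  have hsingle := Finset.single_le_sum
    (fun j _ => mul_nonneg (by norm_num : (0 : ℝ) ≤ 54) (distortion_nonneg P (pullback j α)))
    (Finset.mem_univ i)
  have hsmall := hα.sum_distortion_le_sum_blockCost hP (k := fun _ => 1) (fun _ => le_rfl)
    (by simpa using hn)
  norm_num [blockCost] at hsmall
  linarith

lemma blockCost_card_le (i : Fin 3) :
    blockCost (assignedPart α i).card ≤ 54 * distortion P (pullback i α) + 1 := by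
  rw [blockCost]
  rcases min_cases (assignedPart α i).card 3 with ⟨hmin, -⟩ | ⟨hmin, -⟩ <;> rw [hmin]
  · linarith [hα.sub_card_assignedPart_le hP i]
  · norm_num
    exact distortion_nonneg _ _

-- Otherwise it would pay off to hand one point of the `q`-th cell to the `p`-th cell.
lemma card_assignedPart_le_three (hn : 3 ≤ n) {p : Fin 3} (hp : (assignedPart α p).card ≤ 2)
    (q : Fin 3) : (assignedPart α q).card ≤ 3 := by
  by_contra! hq
  obtain ⟨k, hk⟩ : ∃ k : Fin 3 → ℕ, ∀ i, k i + (if i = q then 1 else 0)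
      = (assignedPart α i).card + (if i = p then 1 else 0) := by
    refine ⟨_, fun i => Nat.sub_add_cancel (le_add_right ?_)⟩
    split_ifs with hi
    · exact hi ▸ hq.le.trans' (by norm_num)
    · exact zero_le
  have hsum : ∑ i, k i ≤ n := by
    have := Finset.sum_congr rfl fun i (_ : i ∈ Finset.univ) => hk i
    simp only [Finset.sum_add_distrib, Finset.sum_ite_eq', Finset.mem_univ, if_true] at this
    linarith [sum_card_assignedPart α, hα.card_le]
  have hpos i : 1 ≤ k i := by
    have := (hα.assignedPart_nonempty hP hn i).card_pos
    grind
  have hcost i : blockCost (k i) + (if i = p then 4 else 0)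
      ≤ 54 * distortion P (pullback i α) + 1 := by
    have hmin : min (assignedPart α i).card 3 + (if i = p then 1 else 0) ≤ min (k i) 3 := by
      grind
    have := (Nat.cast_le (α := ℝ)).2 hmin
    refine le_trans ?_ (hα.blockCost_card_le hP i)
    rw [blockCost, blockCost]
    split_ifs at this ⊢ <;> push_cast at this ⊢ <;> linarith
  have hgain := Finset.sum_le_sum fun i (_ : i ∈ Finset.univ) => hcost i
  simp only [Finset.sum_add_distrib, Finset.sum_ite_eq', Finset.mem_univ, if_true] at hgain
  have hopt := hα.sum_distortion_le_sum_blockCost hP hpos hsum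
  norm_num at hgain
  linarith

end IsDistortionMinimizer

namespace IsDistortionMinimizer

variable {P : Measure E2} [IsProbabilityMeasure P] {n : ℕ} {α : Finset E2}
  (hα : IsDistortionMinimizer P n α) (hP : IsSelfSimilar P)

include hα hP

lemma exists_distortion_add_strayCharge_le (hn : 3 ≤ n) {i : Fin 3}
    (hi : (assignedPart α i).card ≤ 3) :
    ∃ γ : Finset E2, γ.Nonempty ∧ γ.card ≤ (assignedPart α i).card ∧
      54 * distortion P γ + strayCharge α i ≤ 54 * distortion P (pullback i α) ∧
      (strayTargets α i = ∅ ∨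
        54 * distortion P γ + strayCharge α i < 54 * distortion P (pullback i α)) := by
  have hK := hα.assignedPart_nonempty hP hn i
  obtain ⟨β, hβ, hβcard, hβcost⟩ := hP.exists_distortion_le_blockCost hK.card_pos
  have hblock : blockCost (assignedPart α i).card = 13 - 4 * (assignedPart α i).card := by
    rw [blockCost, min_eq_left hi]
  rw [strayCharge]
  rcases (strayTargets α i).eq_empty_or_nonempty with hout | hout
  · rw [hout, Finset.card_empty, Nat.cast_zero, zero_sub]
    rcases Finset.eq_empty_or_nonempty {j | i ∈ strayTargets α j} with hin | hin
    · rw [hin, Finset.card_empty, Nat.cast_zero, neg_zero]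
      have hstray j : i ∉ strayTargets α j := by
        simpa using Finset.eq_empty_iff_forall_notMem.1 hin j
      rcases hP.distortion_eq_or_blockCost_lt hK assignedPart_subset_pullback
        fun a ha haK x hx => four_fifths_le_dist_of_notMem_assignedPart hstray ha haK hx with h | h
      · exact ⟨_, hK, le_rfl, by linarith, Or.inl rfl⟩
      · exact ⟨β, hβ, hβcard, by linarith, Or.inl rfl⟩
    · have : (1 : ℝ) ≤ Finset.card {j | i ∈ strayTargets α j} := by exact_mod_cast hin.card_pos
      exact ⟨β, hβ, hβcard, by linarith [hα.sub_card_assignedPart_le hP i], Or.inl rfl⟩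
  · have hlt := hP.lt_distortion_of_stray (hK.mono assignedPart_subset_pullback)
      (fun a ha haK x hx => half_le_dist_of_notMem_assignedPart ha haK hx) hout
    rw [← hblock, ← strayTargets] at hlt
    have := Nat.cast_nonneg (α := ℝ) (Finset.card {j | i ∈ strayTargets α j})
    exact ⟨β, hβ, hβcard, by linarith, Or.inr (by linarith)⟩

lemma strayTargets_eq_empty (hn : 3 ≤ n) (hcard : ∀ i, (assignedPart α i).card ≤ 3) (i : Fin 3) :
    strayTargets α i = ∅ := by
  choose γ hγ hγcard hle hlt using fun i => hα.exists_distortion_add_strayCharge_le hP hn (hcard i)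
  exact (hlt i).resolve_right
    (hα.distortion_pullback_eq hP hγ hγcard (sum_strayCharge α) hle i).not_lt

lemma distortion_pullback_eq_or_blockCost_lt (hn : 3 ≤ n) (i : Fin 3) :
    distortion P (pullback i α) = distortion P (assignedPart α i) ∨
      blockCost (assignedPart α i).card < 54 * distortion P (pullback i α) := by
  by_cases! hcard : ∀ j, 3 ≤ (assignedPart α j).card
  · exact hP.distortion_eq_or_blockCost_lt_of_three_le_card (hcard i) assignedPart_subset_pullback
      fun a ha haK x hx => half_le_dist_of_notMem_assignedPart ha haK hx
  · obtain ⟨p, hp⟩ := hcard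
    have hstray := hα.strayTargets_eq_empty hP hn
      (hα.card_assignedPart_le_three hP hn (Nat.le_of_lt_succ hp))
    exact hP.distortion_eq_or_blockCost_lt (hα.assignedPart_nonempty hP hn i)
      assignedPart_subset_pullback fun a ha haK x hx =>
        four_fifths_le_dist_of_notMem_assignedPart (by simp [hstray]) ha haK hx

lemma distortion_assignedPart (hn : 3 ≤ n) (i : Fin 3) :
    distortion P (assignedPart α i) = distortion P (pullback i α) := by
  have hblock i : ∃ γ : Finset E2, γ.Nonempty ∧ γ.card ≤ (assignedPart α i).card ∧
      54 * distortion P γ ≤ 54 * distortion P (pullback i α) ∧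
      (distortion P (assignedPart α i) = distortion P (pullback i α) ∨
        54 * distortion P γ < 54 * distortion P (pullback i α)) := by
    have hK := hα.assignedPart_nonempty hP hn i
    rcases hα.distortion_pullback_eq_or_blockCost_lt hP hn i with h | h
    · exact ⟨_, hK, le_rfl, by rw [h], Or.inl h.symm⟩
    · obtain ⟨β, hβ, hβcard, hβcost⟩ := hP.exists_distortion_le_blockCost hK.card_pos
      exact ⟨β, hβ, hβcard, (hβcost.trans_lt h).le, Or.inr (hβcost.trans_lt h)⟩
  choose γ hγ hγcard hle hlt using hblock
  have heq := hα.distortion_pullback_eq hP hγ hγcard (c := 0) (by simp) (by simpa using hle) i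
  exact (hlt i).resolve_right (by simpa using heq.ge)

lemma isDistortionMinimizer_assignedPart (hn : 3 ≤ n) (i : Fin 3) :
    IsDistortionMinimizer P (assignedPart α i).card (assignedPart α i) := by
  refine ⟨hα.assignedPart_nonempty hP hn i, le_rfl, fun B hB hBcard => ?_⟩
  by_contra! hlt
  have hswap : ∀ j, (Function.update (assignedPart α) i B j).Nonempty ∧
      (Function.update (assignedPart α) i B j).card ≤ (assignedPart α j).card ∧
      54 * distortion P (Function.update (assignedPart α) i B j) + 0
        ≤ 54 * distortion P (pullback j α) := by
    simp only [← hα.distortion_assignedPart hP hn]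
    refine (Function.forall_update_iff _ fun j (γ : Finset E2) => γ.Nonempty ∧
      γ.card ≤ (assignedPart α j).card ∧
      54 * distortion P γ + 0 ≤ 54 * distortion P (assignedPart α j)).2
      ⟨⟨hB, hBcard, by linarith⟩, fun j _ => ⟨hα.assignedPart_nonempty hP hn j, le_rfl, by simp⟩⟩
  choose hne hcard hle using hswap
  have heq := hα.distortion_pullback_eq hP hne hcard (c := 0) (by simp) hle i
  rw [Function.update_self, ← hα.distortion_assignedPart hP hn, Pi.zero_apply] at heq
  linarith

lemma preimage_inter_image_Tri (hn : 3 ≤ n) (i : Fin 3) :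
    Smap i ⁻¹' (α ∩ Smap i '' Tri) = assignedPart α i := by
  rw [Set.preimage_inter, (bijective_Smap i).injective.preimage_image, ← coe_pullback]
  refine Set.Subset.antisymm (fun b ⟨hb, hbT⟩ => ?_) fun b hb =>
    ⟨assignedPart_subset_pullback hb,
      (hα.isDistortionMinimizer_assignedPart hP hn i).subset_Tri hP hb⟩
  by_contra hbi
  obtain ⟨j, hj⟩ := exists_one_le_edgeCoord hb hbi
  linarith [edgeCoord_le_half i j hbT]

lemma err_eq_sum_assignedPart (hn : 3 ≤ n) :
    err P α = ∑ i, (27 : ℝ≥0∞)⁻¹ * err P (assignedPart α i) := by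
  have h27 : (27 : ℝ≥0∞)⁻¹ = ENNReal.ofReal (1 / 27) := by
    rw [one_div, ENNReal.ofReal_inv_of_pos (by norm_num), ENNReal.ofReal_ofNat]
  rw [hP.err_eq_ofReal_distortion hα.nonempty, hP.distortion_eq_sum_pullback, Finset.mul_sum,
    ENNReal.ofReal_sum_of_nonneg fun i _ => mul_nonneg (by norm_num) (distortion_nonneg P _)]
  refine Finset.sum_congr rfl fun i _ => ?_
  rw [← hα.distortion_assignedPart hP hn, ENNReal.ofReal_mul (by norm_num),
    hP.err_eq_ofReal_distortion (hα.assignedPart_nonempty hP hn i), h27]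

end IsDistortionMinimizer

/-- If α is an optimal set of n-means (n ≥ 3) for the R-measure P and β_i = α ∩ △_i with
n_i = card β_i, then S_i⁻¹(β_i) is an optimal set of n_i-means for P, and
V_n(P) = ∑_{i=1}^{3} (1/27)·V_{n_i}(P). -/
theorem stmt_9 (P : Measure E2) [IsProbabilityMeasure P]
    (hP : P = (3 : ℝ≥0∞)⁻¹ • (P.map S1 + P.map S2 + P.map S3))
    (n : ℕ) (hn : 3 ≤ n) (α : Set E2) (hα : IsOptimal P n α) :
    (∀ i : Fin 3,
        IsOptimal P ((α ∩ Smap i '' Tri).ncard) (Smap i ⁻¹' (α ∩ Smap i '' Tri)))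
      ∧ quantErr P n
          = ∑ i : Fin 3, (27 : ℝ≥0∞)⁻¹ * quantErr P ((α ∩ Smap i '' Tri).ncard) := by
  have hself : IsSelfSimilar P := by
    rw [IsSelfSimilar, Fin.sum_univ_three]
    exact hP
  lift α to Finset E2 using hα.1
  have hmin := (hself.isOptimal_iff (by omega)).1 hα
  have hpart i : Smap i ⁻¹' (α ∩ Smap i '' Tri) = assignedPart α i :=
    hmin.preimage_inter_image_Tri hself hn i
  have hcard i : ((α : Set E2) ∩ Smap i '' Tri).ncard = (assignedPart α i).card := by
    rw [← Set.ncard_coe_finset, ← hpart, Set.ncard_preimage_of_injective_subset_range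
      (bijective_Smap i).injective (by simp [(bijective_Smap i).surjective.range_eq])]
  have hopt i : IsOptimal P (assignedPart α i).card (assignedPart α i) :=
    (hself.isOptimal_iff (hmin.assignedPart_nonempty hself hn i).card_pos).2
      (hmin.isDistortionMinimizer_assignedPart hself hn i)
  simp only [hpart, hcard]
  refine ⟨hopt, ?_⟩
  simp only [← hα.2.2, ← (hopt _).2.2]
  exact hmin.err_eq_sum_assignedPart hself hn

end
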